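/- Consider the step image f(t₁,t₂) = 1_{{t₂ < 1/2}} with n even, and let j* = ⌈n/2⌉, so pixels (i*, j*) lie just above the edge. There exist a constant p₀ > 0 (independent of n, δ_n, and t_n) and n₀ such that for every pixel (i*, j*), every window size δ_n, every threshold t_n > 0, every t > 0, and every n ≥ n₀, the SNLM weights of the row just below the edge satisfy P( Σ_{m=1}^{n} w^S_{i*,j*}(m, j*−1) − n p₀ < −t ) ≤ 4 δ_n exp( −t²/(4 n δ_n) ). -/

import Mathlib

open MeasureTheory ProbabilityTheory Real Finset Filter

noncomputable section

/-- The pixel grid: indices are taken mod `n` (periodic extension). -/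
abbrev Px (n : ℕ) := ZMod n × ZMod n

/-- The distribution of the i.i.d. `N(0, σ²)` noise array. -/
def noise (n : ℕ) [NeZero n] (σ : ℝ) : Measure (Px n → ℝ) :=
  Measure.pi fun _ => gaussianReal 0 (Real.toNNReal (σ ^ 2))

/-- The Hölder ball `Hölder^α(C)` of functions on `ℝ`. -/
def HolderBall (α C : ℝ) : Set (ℝ → ℝ) :=
  {h | ∀ t t' : ℝ,
    |iteratedDeriv ⌊α⌋₊ h t - iteratedDeriv ⌊α⌋₊ h t'| ≤ C * |t - t'| ^ (α - (⌊α⌋₊ : ℝ))}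

/-- Edge contours of the Horizon class `H^α(C)`. -/
def HorizonFns (α C : ℝ) : Set (ℝ → ℝ) := HolderBall α C ∩ HolderBall 1 1

/-- The Horizon image `f_h(t₁,t₂) = 1_{t₂ < h t₁}`. -/
def horizonImg (h : ℝ → ℝ) (t₁ t₂ : ℝ) : ℝ := if t₂ < h t₁ then 1 else 0

/-- `x_{i,j}`: average of `f` over `Pixel(i,j)`. -/
def pixelAvg (n : ℕ) [NeZero n] (f : ℝ → ℝ → ℝ) (p : Px n) : ℝ :=
  (n : ℝ) ^ 2 * ∫ t₁ in ((p.1.val : ℝ) / n)..(((p.1.val : ℝ) + 1) / n),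
      ∫ t₂ in ((p.2.val : ℝ) / n)..(((p.2.val : ℝ) + 1) / n), f t₁ t₂

/-- The pixel array of the Horizon image `f_h`. -/
def horizonPixels (n : ℕ) [NeZero n] (h : ℝ → ℝ) : Px n → ℝ :=
  pixelAvg n (horizonImg h)

/-- The risk `R_n(f, f̂) = E[(1/n²) Σ (x_{i,j} - f̂_{i,j})²]` of an estimator `est`
which maps observations `y = x + z` to an estimated pixel array. -/
def risk (n : ℕ) [NeZero n] (σ : ℝ) (x : Px n → ℝ)
    (est : (Px n → ℝ) → Px n → ℝ) : ℝ :=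
  ∫ z, (1 / (n : ℝ) ^ 2) * ∑ p : Px n, (x p - est (fun q => x q + z q) p) ^ 2 ∂(noise n σ)


/-- The square window of offsets `{-δ,…,δ}²`. -/
def offsets (δ : ℕ) : Finset (ℤ × ℤ) :=
  Finset.Icc (-(δ : ℤ)) (δ : ℤ) ×ˢ Finset.Icc (-(δ : ℤ)) (δ : ℤ)

/-- Shift a pixel by an integer offset (periodic extension). -/
def shift {n : ℕ} (p : Px n) (o : ℤ × ℤ) : Px n :=
  (p.1 + (o.1 : ZMod n), p.2 + (o.2 : ZMod n))

/-- The `δ`-neighborhood distance `d²_δ(y_p, y_q)` (center element removed),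
normalized by `ρ² = (2δ+1)² - 1`. -/
def nlmDist2 (n : ℕ) (δ : ℕ) (y : Px n → ℝ) (p q : Px n) : ℝ :=
  (1 / (((2 * δ + 1) ^ 2 - 1 : ℕ) : ℝ)) *
    ((∑ o ∈ offsets δ, |y (shift p o) - y (shift q o)| ^ 2) - |y p - y q| ^ 2)

/-- The (hard-thresholded) NLM weight: `1` if `d²_δ(y_p, y_q) ≤ 2σ² + t`, else `0`. -/
def nlmWeight (n : ℕ) (δ : ℕ) (σ t : ℝ) (y : Px n → ℝ) (p q : Px n) : ℝ :=
  if nlmDist2 n δ y p q ≤ 2 * σ ^ 2 + t then 1 else 0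

/-- The NLM estimate at pixel `p` (search over the whole image). -/
def nlmEst (n : ℕ) [NeZero n] (δ : ℕ) (σ t : ℝ) (y : Px n → ℝ) (p : Px n) : ℝ :=
  (∑ q : Px n, nlmWeight n δ σ t y p q * y q) / (∑ q : Px n, nlmWeight n δ σ t y p q)

/-- The semi-oracle `δ`-neighborhood distance `d̄²_δ(y_p, y_q)`: the reference
neighborhood uses the noise-free values `x`, the other the observations `y`. -/
def snlmDist2 (n : ℕ) (δ : ℕ) (x y : Px n → ℝ) (p q : Px n) : ℝ :=
  (1 / (((2 * δ + 1) ^ 2 - 1 : ℕ) : ℝ)) *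
    ((∑ o ∈ offsets δ, |x (shift p o) - y (shift q o)| ^ 2) - (x p - y q) ^ 2)

/-- The semi-oracle NLM weight: `1` if `d̄²_δ(y_p, y_q) ≤ σ² + t`, else `0`. -/
def snlmWeight (n : ℕ) (δ : ℕ) (σ t : ℝ) (x y : Px n → ℝ) (p q : Px n) : ℝ :=
  if snlmDist2 n δ x y p q ≤ σ ^ 2 + t then 1 else 0

/-- The semi-oracle NLM estimate at pixel `p` (search over the whole image). -/
def snlmEst (n : ℕ) [NeZero n] (δ : ℕ) (σ t : ℝ) (x y : Px n → ℝ) (p : Px n) : ℝ :=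
  (∑ q : Px n, snlmWeight n δ σ t x y p q * y q) /
    (∑ q : Px n, snlmWeight n δ σ t x y p q)

/-- The risk of the semi-oracle NLM on the image with pixel array `x`. -/
def snlmRisk (n : ℕ) [NeZero n] (σ : ℝ) (δ : ℕ) (t : ℝ) (x : Px n → ℝ) : ℝ :=
  ∫ z, (1 / (n : ℝ) ^ 2) * ∑ p : Px n,
    (x p - snlmEst n δ σ t x (fun q => x q + z q) p) ^ 2 ∂(noise n σ)

/-- The pixel array of the step image `f(t₁,t₂) = 1_{t₂ < 1/2}` (for `n` even this
is exactly the array of pixel averages): `x_{i,j} = 1` iff `j < n/2`. -/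
def stepX (n : ℕ) : Px n → ℝ := fun p => if 2 * p.2.val < n then 1 else 0

/-- The row index `j* = ⌈n/2⌉` of the pixels just above the edge of the step image. -/
def jstar (n : ℕ) : ZMod n := ((n + 1) / 2 : ℕ)

/-- the one-pixel noise law -/
abbrev gam (σ : ℝ) : Measure ℝ := gaussianReal 0 (Real.toNNReal (σ ^ 2))

lemma gam_var_ne (σ : ℝ) (hσ : 0 < σ) : Real.toNNReal (σ ^ 2) ≠ 0 := by
  have : 0 < σ ^ 2 := by positivity
  simpa using this.ne'

lemma gauss_open_pos {v : NNReal} (hv : v ≠ 0) {U : Set ℝ} (hU : IsOpen U) (hne : U.Nonempty) :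
    0 < gaussianReal 0 v U := by
  rw [pos_iff_ne_zero]
  intro h
  exact hU.measure_ne_zero volume hne (gaussianReal_absolutelyContinuous' 0 hv h)

lemma gam_int_sq (σ : ℝ) : ∫ x, x ^ 2 ∂(gam σ) = σ ^ 2 := by
  have h := variance_fun_id_gaussianReal (μ := 0) (v := Real.toNNReal (σ ^ 2))
  rw [variance_eq_integral measurable_id'.aemeasurable] at h
  simp only [integral_id_gaussianReal, sub_zero] at h
  rw [h, Real.coe_toNNReal _ (by positivity)]

lemma gam_memLp_sq (σ : ℝ) : MemLp (fun x : ℝ => x ^ 2) 2 (gam σ) := by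
  have h4 : MemLp (id : ℝ → ℝ) 4 (gam σ) := memLp_id_gaussianReal' 4 (by simp)
  rw [memLp_two_iff_integrable_sq (by fun_prop)]
  have := h4.integrable_norm_pow (p := 4) (by simp)
  refine this.congr (ae_of_all _ fun x => ?_)
  simp only [id]
  rw [← pow_mul, Real.norm_eq_abs]
  norm_num
  exact Even.pow_abs (by decide) x

lemma gam_var_sq_ne (σ : ℝ) (hσ : 0 < σ) : Var[fun x : ℝ => x ^ 2; gam σ] ≠ 0 := by
  intro h
  have h1 := ae_eq_integral_of_variance_eq_zero (gam_memLp_sq σ) h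
  rw [gam_int_sq] at h1
  have h2 := gauss_open_pos (gam_var_ne σ hσ) (U := Set.Ioo 0 σ) isOpen_Ioo ⟨σ/2, by
    constructor <;> linarith⟩
  refine h2.ne' (measure_mono_null ?_ h1)
  intro x hx hx'
  have hx'' : x ^ 2 = σ ^ 2 := hx'
  nlinarith [hx.1, hx.2]

lemma chi_tail (σ : ℝ) (hσ : 0 < σ) : ∃ p : ℝ, 0 < p ∧ ∃ N₀ : ℕ, ∀ (ι : Type) [Fintype ι],
    N₀ ≤ Fintype.card ι → p ≤ (Measure.pi fun _ : ι => gam σ).real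
      {z | ∑ i, z i ^ 2 + √(Fintype.card ι) ≤ Fintype.card ι * σ ^ 2} := by
  classical
  set P : Measure (ℕ → ℝ) := Measure.infinitePi (fun _ : ℕ => gam σ) with hP
  have hmapeval : ∀ i, P.map (fun ω => ω i) = gam σ := fun i => by
    rw [hP]; exact Measure.infinitePi_map_eval _ i
  have hlaw : ∀ i : ℕ, P.map (fun ω => (ω i) ^ 2) = (gam σ).map (fun x => x ^ 2) := fun i => by
    rw [← hmapeval i, Measure.map_map (by fun_prop) (by fun_prop)]; rfl
  set X : ℕ → (ℕ → ℝ) → ℝ := fun k ω => (ω k) ^ 2 with hX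
  have hind : iIndepFun X P :=
    iIndepFun_infinitePi (P := fun _ : ℕ => gam σ) (X := fun _ x => x ^ 2) (by fun_prop)
  have hmX : ∀ i, Measurable (X i) := fun i => by simp only [hX]; fun_prop
  have hid : ∀ i, IdentDistrib (X i) (X 0) P P := fun i =>
    ⟨(hmX i).aemeasurable, (hmX 0).aemeasurable, by
      simp only [hX]; rw [hlaw, hlaw]⟩
  have hid0 : IdentDistrib (X 0) (fun x : ℝ => x ^ 2) P (gam σ) :=
    ⟨(hmX 0).aemeasurable, by fun_prop, hlaw 0⟩
  have hmem : MemLp (X 0) 2 P := hid0.memLp_iff.2 (gam_memLp_sq σ)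
  have hmean : P[X 0] = σ ^ 2 := by rw [hid0.integral_eq, gam_int_sq]
  have hvar : Var[X 0; P] ≠ 0 := by rw [hid0.variance_eq]; exact gam_var_sq_ne σ hσ
  have hvar' : Var[X 0; P].toNNReal ≠ 0 := by
    have : 0 < Var[X 0; P] := lt_of_le_of_ne (variance_nonneg _ _) hvar.symm
    simpa using this
  have hclt := tendstoInDistribution_inv_sqrt_mul_sum_sub (Y := id)
    (P' := gaussianReal 0 Var[X 0; P].toNNReal) HasLaw.id hmem hind hid
  have hport := ProbabilityMeasure.le_liminf_measure_open_of_tendsto hclt.tendsto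
    (isOpen_Iio (a := (-1 : ℝ)))
  simp only [ProbabilityMeasure.coe_mk, Measure.map_id] at hport
  have hpos := gauss_open_pos hvar' (isOpen_Iio (a := (-1 : ℝ))) ⟨-2, by norm_num⟩
  obtain ⟨c, hc0, hc⟩ := exists_between hpos
  have hev := eventually_lt_of_lt_liminf (lt_of_lt_of_le hc hport)
  obtain ⟨N₀, hN₀⟩ := eventually_atTop.1 hev
  have hctop : c ≠ ⊤ := hc.ne_top
  refine ⟨c.toReal, ENNReal.toReal_pos hc0.ne' hctop, N₀ + 1, ?_⟩
  intro ι _ hcard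
  have hN := hN₀ (Fintype.card ι) (by omega)
  rw [Measure.map_apply (by fun_prop) measurableSet_Iio] at hN
  set N := Fintype.card ι with hNdef
  let e := Fintype.equivFin ι
  have hinj : Function.Injective (fun i : ι => ((e i : Fin _) : ℕ)) :=
    Fin.val_injective.comp e.injective
  have hmp := Measure.map_infinitePi_infinitePi_of_inj (P := fun _ : ℕ => gam σ) hinj
  rw [Measure.infinitePi_eq_pi (μ := fun _ : ι => gam σ)] at hmp
  rw [← hmp, measureReal_def]
  refine ENNReal.toReal_mono (measure_ne_top _ _) (hN.le.trans ?_)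
  have hms : MeasurableSet {z : ι → ℝ | ∑ i, z i ^ 2 + √(N:ℝ) ≤ N * σ ^ 2} :=
    measurableSet_le (by fun_prop) (by fun_prop)
  rw [Measure.map_apply (by fun_prop) hms]
  refine measure_mono ?_
  intro ω hω
  simp only [Set.mem_preimage, Set.mem_Iio, Set.mem_ofPred_eq] at hω ⊢
  have hsum : ∑ i : ι, ω (e i) ^ 2 = ∑ k ∈ range N, X k ω := by
    rw [← Fin.sum_univ_eq_sum_range (fun k => X k ω) N, ← e.sum_comp]
  rw [hsum]
  rw [hmean] at hω
  have hNpos : (0:ℝ) < √(N:ℝ) := Real.sqrt_pos.2 (by exact_mod_cast (by omega : 0 < N))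
  have := (inv_mul_lt_iff₀ hNpos).1 hω
  linarith

lemma small_N (σ : ℝ) (hσ : 0 < σ) : ∃ c : ℝ, 0 < c ∧ c ≤ 1 ∧ ∀ (ι : Type) [Fintype ι] (a : ι → ℝ),
    (∀ i, a i = 0 ∨ a i = 1) → c ^ (Fintype.card ι) ≤ (Measure.pi fun _ : ι => gam σ).real
      {z | ∑ i, (z i + a i) ^ 2 ≤ Fintype.card ι * σ ^ 2} := by
  have h0 := gauss_open_pos (gam_var_ne σ hσ) (U := Set.Ioo (-σ) σ) isOpen_Ioo ⟨0, by
    constructor <;> linarith⟩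
  have h1 := gauss_open_pos (gam_var_ne σ hσ) (U := Set.Ioo (-1-σ) (-1+σ)) isOpen_Ioo ⟨-1, by
    constructor <;> linarith⟩
  set c0 := (gam σ).real (Set.Ioo (-σ) σ)
  set c1 := (gam σ).real (Set.Ioo (-1-σ) (-1+σ))
  have hc0 : 0 < c0 := ENNReal.toReal_pos h0.ne' (measure_ne_top _ _)
  have hc1 : 0 < c1 := ENNReal.toReal_pos h1.ne' (measure_ne_top _ _)
  refine ⟨min c0 c1, lt_min hc0 hc1, (min_le_left _ _).trans measureReal_le_one, ?_⟩
  intro ι _ a ha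
  have hsub : Set.pi Set.univ (fun i => Set.Ioo (-a i - σ) (-a i + σ)) ⊆
      {z : ι → ℝ | ∑ i, (z i + a i) ^ 2 ≤ Fintype.card ι * σ ^ 2} := by
    intro z hz
    simp only [Set.mem_pi, Set.mem_univ, true_implies, Set.mem_Ioo, Set.mem_ofPred_eq] at hz ⊢
    calc ∑ i, (z i + a i) ^ 2 ≤ ∑ i : ι, σ ^ 2 :=
          Finset.sum_le_sum fun i _ => by nlinarith [hz i]
      _ = _ := by simp
  refine le_trans ?_ (measureReal_mono hsub)
  rw [measureReal_def, Measure.pi_pi, ENNReal.toReal_prod]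
  rw [← Finset.card_univ, ← Finset.prod_const]
  refine Finset.prod_le_prod (fun _ _ => (lt_min hc0 hc1).le) fun i _ => ?_
  rcases ha i with h | h
  · rw [h]; simp only [neg_zero, zero_sub, zero_add]; exact min_le_left _ _
  · rw [h]; exact min_le_right _ _

lemma neg_mp (σ : ℝ) (ι : Type) [Fintype ι] :
    MeasurePreserving (fun z : ι → ℝ => -z) (Measure.pi fun _ : ι => gam σ)
      (Measure.pi fun _ : ι => gam σ) := by
  have := measurePreserving_pi (fun _ : ι => gam σ) (fun _ : ι => gam σ) (f := fun _ x => -x)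
    (fun i => ⟨by fun_prop, by simpa using gaussianReal_map_neg (μ := 0) (v := Real.toNNReal (σ^2))⟩)
  exact this

lemma chi_noncentral (σ : ℝ) (hσ : 0 < σ) : ∃ p : ℝ, 0 < p ∧ p ≤ 1 ∧
    ∀ (ι : Type) [Fintype ι] (a : ι → ℝ),
    (∀ i, a i = 0 ∨ a i = 1) → (∑ i, a i) ≤ √(Fintype.card ι) →
    p ≤ (Measure.pi fun _ : ι => gam σ).real
      {z | ∑ i, (z i + a i) ^ 2 ≤ Fintype.card ι * σ ^ 2} := by
  obtain ⟨p1, hp1, N₀, h1⟩ := chi_tail σ hσ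
  obtain ⟨c, hc, hc1, h2⟩ := small_N σ hσ
  refine ⟨min (p1 / 2) (c ^ N₀), by positivity, (min_le_right _ _).trans (pow_le_one₀ hc.le hc1), ?_⟩
  intro ι _ a ha hsum
  rcases lt_or_ge (Fintype.card ι) N₀ with hN | hN
  · exact (min_le_right _ _).trans ((pow_le_pow_of_le_one hc.le hc1 hN.le).trans (h2 ι a ha))
  refine (min_le_left _ _).trans ?_
  have h := h1 ι hN
  set Q := Measure.pi fun _ : ι => gam σ
  set N := Fintype.card ι
  set E := {z : ι → ℝ | ∑ i, (z i + a i) ^ 2 ≤ N * σ ^ 2} with hE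
  have hEm : MeasurableSet E := measurableSet_le (by fun_prop) (by fun_prop)
  have hneg : Q.real ((fun z : ι → ℝ => -z) ⁻¹' E) = Q.real E := by
    rw [measureReal_def, (neg_mp σ ι).measure_preimage hEm.nullMeasurableSet, measureReal_def]
  have hcover : {z : ι → ℝ | ∑ i, z i ^ 2 + √(N:ℝ) ≤ N * σ ^ 2} ⊆
      E ∪ ((fun z : ι → ℝ => -z) ⁻¹' E) := by
    intro z hz
    have hasq : ∀ i, a i ^ 2 = a i := fun i => by rcases ha i with h | h <;> simp [h]
    have e1 : ∑ i, (z i + a i) ^ 2 = ∑ i, z i ^ 2 + 2 * ∑ i, z i * a i + ∑ i, a i := by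
      rw [Finset.mul_sum, ← Finset.sum_add_distrib, ← Finset.sum_add_distrib]
      refine Finset.sum_congr rfl fun i _ => ?_
      linear_combination hasq i
    have e2 : ∑ i, (-z i + a i) ^ 2 = ∑ i, z i ^ 2 - 2 * ∑ i, z i * a i + ∑ i, a i := by
      rw [Finset.mul_sum, ← Finset.sum_sub_distrib, ← Finset.sum_add_distrib]
      refine Finset.sum_congr rfl fun i _ => ?_
      linear_combination hasq i
    simp only [Set.mem_ofPred_eq] at hz
    simp only [hE, Set.mem_union, Set.mem_ofPred_eq, Set.mem_preimage, Pi.neg_apply, e1, e2]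
    rcases le_total (∑ i, z i * a i) 0 with h | h
    · left; linarith
    · right; linarith
  have := (measureReal_mono hcover (μ := Q)).trans (measureReal_union_le _ _)
  rw [hneg] at this
  linarith

lemma block_prod {ι : Type} [Fintype ι] [DecidableEq ι] (ν : Measure ℝ) [IsProbabilityMeasure ν]
    (g : ℕ → (ι → ℝ) → ℝ) (B : ℕ → Finset ι) (hg : ∀ k, Measurable (g k))
    (hdep : ∀ k z z', (∀ i ∈ B k, z i = z' i) → g k z = g k z') (q : ℕ)
    (hdisj : ∀ k < q, ∀ l < q, k ≠ l → Disjoint (B k) (B l)) :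
    ∫ z, ∏ k ∈ range q, g k z ∂(Measure.pi fun _ : ι => ν) =
      ∏ k ∈ range q, ∫ z, g k z ∂(Measure.pi fun _ : ι => ν) := by
  induction q with
  | zero => simp
  | succ q ih =>
    have ih' := ih (fun k hk l hl => hdisj k (by omega) l (by omega))
    simp only [Finset.prod_range_succ]
    rw [← ih']
    set S := (range q).biUnion B
    have hST : Disjoint S (B q) := by
      rw [Finset.disjoint_biUnion_left]
      intro k hk
      have := Finset.mem_range.1 hk
      exact hdisj k (by omega) q (by omega) (by omega)
    have hbase : iIndepFun (fun (i : ι) (ω : ι → ℝ) => ω i) (Measure.pi fun _ : ι => ν) :=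
      iIndepFun_pi (X := fun _ x => x) (by fun_prop)
    have h1 := hbase.indepFun_finset S (B q) hST (fun i => by fun_prop)
    let ext (T : Finset ι) (w : T → ℝ) : ι → ℝ := fun i => if h : i ∈ T then w ⟨i, h⟩ else 0
    have hext : ∀ T, Measurable (ext T) := fun T => by
      refine measurable_pi_lambda _ fun i => ?_
      by_cases h : i ∈ T
      · simp only [ext, h, dite_true]; fun_prop
      · simp only [ext, h, dite_false]; fun_prop
    have hm : Measurable (fun z => ∏ k ∈ range q, g k z) :=
      Finset.measurable_fun_prod _ (fun k _ => hg k)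
    have h2 := h1.comp (φ := fun w => ∏ k ∈ range q, g k (ext S w))
      (ψ := fun w => g q (ext (B q) w)) (hm.comp (hext S)) ((hg q).comp (hext _))
    have e1 : (fun w => ∏ k ∈ range q, g k (ext S w)) ∘ (fun (a : ι → ℝ) (i : S) => a i) =
        fun z => ∏ k ∈ range q, g k z := by
      funext z
      refine Finset.prod_congr rfl fun k hk => hdep k _ _ fun i hi => ?_
      have : i ∈ S := Finset.mem_biUnion.2 ⟨k, hk, hi⟩
      simp [ext, this]
    have e2 : (fun w => g q (ext (B q) w)) ∘ (fun (a : ι → ℝ) (i : B q) => a i) =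
        fun z => g q z := by
      funext z
      refine hdep q _ _ fun i hi => ?_
      simp [ext, hi]
    rw [e1, e2] at h2
    exact h2.integral_fun_mul_eq_mul_integral hm.aestronglyMeasurable (hg q).aestronglyMeasurable

lemma int_small {n δ : ℕ} (a b : ℤ) (ha : -(δ:ℤ) ≤ a ∧ a ≤ δ) (hb : -(δ:ℤ) ≤ b ∧ b ≤ δ)
    (hn : 2 * δ < n) (h : (a : ZMod n) = b) : a = b := by
  rw [ZMod.intCast_eq_intCast_iff_dvd_sub] at h
  have := Int.eq_zero_of_abs_lt_dvd h (by rw [abs_lt]; constructor <;> omega)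
  omega

lemma shift_inj {n δ : ℕ} (hn : 2 * δ < n) (q : Px n) (o o' : ℤ × ℤ) (ho : o ∈ offsets δ)
    (ho' : o' ∈ offsets δ) (h : shift q o = shift q o') : o = o' := by
  simp only [offsets, Finset.mem_product, Finset.mem_Icc] at ho ho'
  simp only [shift, Prod.mk.injEq, add_right_inj] at h
  exact Prod.ext (int_small _ _ ho.1 ho'.1 hn h.1) (int_small _ _ ho.2 ho'.2 hn h.2)

lemma step_val {n : ℕ} [NeZero n] (c : ℤ) (h0 : 0 ≤ c) (h1 : c < n) :
    (((c : ZMod n).val : ℕ) : ℤ) = c := by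
  rw [ZMod.val_intCast]; exact Int.emod_eq_of_lt h0 h1

lemma step_p {n δ : ℕ} [NeZero n] (he : Even n) (hn : 2 * δ < n) (i : ZMod n) (o : ℤ × ℤ)
    (ho : o ∈ offsets δ) : stepX n (shift (i, jstar n) o) = if o.2 < 0 then 1 else 0 := by
  obtain ⟨h, rfl⟩ := he
  simp only [offsets, Finset.mem_product, Finset.mem_Icc] at ho
  have e : (jstar (h + h) + (o.2 : ZMod (h+h))) = (((h : ℤ) + o.2 : ℤ) : ZMod (h+h)) := by
    have : (h + h + 1) / 2 = h := by omega
    simp [jstar, this]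
  have hv := step_val (n := h + h) ((h:ℤ) + o.2) (by omega) (by push_cast; omega)
  unfold stepX
  rw [show (shift (i, jstar (h + h)) o).2 = _ from e]
  refine if_congr ?_ rfl rfl
  omega

lemma step_q {n δ : ℕ} [NeZero n] (he : Even n) (hn : 2 * δ < n) (i : ZMod n) (o : ℤ × ℤ)
    (ho : o ∈ offsets δ) : stepX n (shift (i, jstar n - 1) o) = if o.2 ≤ 0 then 1 else 0 := by
  obtain ⟨h, rfl⟩ := he
  simp only [offsets, Finset.mem_product, Finset.mem_Icc] at ho
  have e : (jstar (h + h) - 1 + (o.2 : ZMod (h+h))) = (((h : ℤ) - 1 + o.2 : ℤ) : ZMod (h+h)) := by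
    have : (h + h + 1) / 2 = h := by omega
    simp [jstar, this]
  have hv := step_val (n := h + h) ((h:ℤ) - 1 + o.2) (by omega) (by push_cast; omega)
  unfold stepX
  rw [show (shift (i, jstar (h + h) - 1) o).2 = _ from e]
  refine if_congr ?_ rfl rfl
  omega

lemma zero_mem_offsets (δ : ℕ) : ((0, 0) : ℤ × ℤ) ∈ offsets δ := by
  simp [offsets]

lemma card_offsets (δ : ℕ) : ((offsets δ).erase (0, 0)).card = (2 * δ + 1) ^ 2 - 1 := by
  rw [Finset.card_erase_of_mem (zero_mem_offsets δ)]
  have : ((δ:ℤ) + 1 + (δ:ℤ)).toNat = 2 * δ + 1 := by omega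
  simp [offsets, this, sq]

lemma shift_zero' {n : ℕ} (q : Px n) : shift q (0, 0) = q := by
  simp [shift]

/-- the key rewriting of the semi-oracle distance -/
lemma dist_eq {n δ : ℕ} [NeZero n] (he : Even n) (hn : 2 * δ < n) (i m : ZMod n) (z : Px n → ℝ) :
    snlmDist2 n δ (stepX n) (fun q => stepX n q + z q) (i, jstar n) (m, jstar n - 1) =
    (1 / (((2 * δ + 1) ^ 2 - 1 : ℕ) : ℝ)) *
      ∑ o ∈ (offsets δ).erase (0, 0),
        (z (shift (m, jstar n - 1) o) + (if o.2 = 0 then 1 else 0)) ^ 2 := by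
  unfold snlmDist2
  congr 1
  rw [← Finset.add_sum_erase _ _ (zero_mem_offsets δ)]
  simp only [shift_zero', sq_abs]
  rw [add_sub_cancel_left]
  refine Finset.sum_congr rfl fun o ho => ?_
  have ho' := Finset.mem_of_mem_erase ho
  rw [step_p he hn i o ho', step_q he hn m o ho']
  rcases lt_trichotomy o.2 0 with h | h | h
  · simp [h, h.le, h.ne]
  · simp [h]; ring
  · simp [h.not_gt, h.not_ge, h.ne']

lemma bad_count (δ : ℕ) :
    ∑ o ∈ (offsets δ).erase (0, 0), (if o.2 = 0 then (1:ℝ) else 0) ≤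
      √(((2 * δ + 1) ^ 2 - 1 : ℕ) : ℝ) := by
  rw [Finset.sum_boole]
  have h1 : (((offsets δ).erase (0, 0)).filter (fun o => o.2 = 0)).card ≤
      ((Finset.Icc (-(δ:ℤ)) δ).erase 0).card := by
    refine Finset.card_le_card_of_injOn Prod.fst ?_ ?_
    · intro o ho
      simp only [Finset.coe_filter, Finset.mem_erase, offsets, Finset.mem_product, Set.mem_ofPred_eq,
        Finset.coe_erase, Set.mem_sdiff, Finset.mem_coe, Set.mem_singleton_iff] at ho ⊢
      refine ⟨ho.1.2.1, fun h => ho.1.1 (Prod.ext h ho.2)⟩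
    · intro o ho o' ho' h
      simp only [Finset.coe_filter, Set.mem_ofPred_eq] at ho ho'
      exact Prod.ext h (ho.2.trans ho'.2.symm)
  have h2 : ((Finset.Icc (-(δ:ℤ)) δ).erase 0).card = 2 * δ := by
    rw [Finset.card_erase_of_mem (by simp)]
    simp; omega
  rw [h2] at h1
  refine Real.le_sqrt_of_sq_le ?_
  have : (((offsets δ).erase (0, 0)).filter (fun o => o.2 = 0)).card ^ 2 ≤ (2 * δ + 1) ^ 2 - 1 := by
    calc _ ≤ (2 * δ) ^ 2 := Nat.pow_le_pow_left h1 2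
      _ ≤ _ := by
        have : (2 * δ) ^ 2 + 1 ≤ (2 * δ + 1) ^ 2 := by ring_nf; omega
        omega
  exact_mod_cast this

lemma noise_shift_law {n δ : ℕ} [NeZero n] (σ : ℝ) (hn : 2 * δ < n) (q : Px n) :
    (noise n σ).map (fun z (o : {o // o ∈ (offsets δ).erase (0, 0)}) => z (shift q o.1)) =
      Measure.pi fun _ => gam σ := by
  have hinj : Function.Injective
      (fun o : {o // o ∈ (offsets δ).erase (0, 0)} => shift q o.1) := by
    intro o o' h
    exact Subtype.ext (shift_inj hn q _ _ (Finset.mem_of_mem_erase o.2)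
      (Finset.mem_of_mem_erase o'.2) h)
  have h := Measure.map_infinitePi_infinitePi_of_inj (P := fun _ : Px n => gam σ) hinj
  rw [Measure.infinitePi_eq_pi (μ := fun _ : Px n => gam σ),
    Measure.infinitePi_eq_pi (μ := fun _ : {o // o ∈ (offsets δ).erase (0, 0)} => gam σ)] at h
  exact h

lemma dist_meas {n δ : ℕ} [NeZero n] (x : Px n → ℝ) (p q : Px n) :
    Measurable (fun z : Px n → ℝ => snlmDist2 n δ x (fun q => x q + z q) p q) := by
  unfold snlmDist2; fun_prop

lemma prob_weight {σ pp : ℝ} (hpp : ∀ (ι : Type) [Fintype ι] (a : ι → ℝ),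
    (∀ i, a i = 0 ∨ a i = 1) → (∑ i, a i) ≤ √(Fintype.card ι) →
    pp ≤ (Measure.pi fun _ : ι => gam σ).real
      {z | ∑ i, (z i + a i) ^ 2 ≤ Fintype.card ι * σ ^ 2})
    {n δ : ℕ} [NeZero n] (hδ : 1 ≤ δ) (he : Even n) (hn : 2 * δ < n) (i m : ZMod n) {tn : ℝ}
    (htn : 0 < tn) :
    pp ≤ (noise n σ).real {z | snlmDist2 n δ (stepX n) (fun q => stepX n q + z q)
      (i, jstar n) (m, jstar n - 1) ≤ σ ^ 2 + tn} := by
  have h := hpp {o // o ∈ (offsets δ).erase (0, 0)} (fun o => if o.1.2 = 0 then 1 else 0)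
    (fun o => by by_cases h : o.1.2 = 0 <;> simp [h]) (by
      rw [Finset.sum_coe_sort ((offsets δ).erase (0, 0)) (fun o => if o.2 = 0 then (1:ℝ) else 0),
        Fintype.card_coe, card_offsets]
      exact bad_count δ)
  rw [Fintype.card_coe, card_offsets] at h
  refine h.trans ?_
  have hms : MeasurableSet {z : {o // o ∈ (offsets δ).erase (0, 0)} → ℝ |
      ∑ o, (z o + if o.1.2 = 0 then 1 else 0) ^ 2 ≤ (((2 * δ + 1) ^ 2 - 1 : ℕ) : ℝ) * σ ^ 2} :=
    measurableSet_le (by fun_prop) (by fun_prop)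
  rw [← noise_shift_law σ hn (m, jstar n - 1), measureReal_def, Measure.map_apply (by fun_prop) hms,
    ← measureReal_def]
  have : IsProbabilityMeasure (noise n σ) := by unfold noise; infer_instance
  refine measureReal_mono ?_
  intro z hz
  simp only [Set.mem_preimage, Set.mem_ofPred_eq] at hz ⊢
  rw [Finset.sum_coe_sort ((offsets δ).erase (0, 0))
    (fun o => (z (shift (m, jstar n - 1) o) + if o.2 = 0 then (1:ℝ) else 0) ^ 2)] at hz
  rw [dist_eq he hn]
  have hN : (0:ℝ) < (((2 * δ + 1) ^ 2 - 1 : ℕ) : ℝ) := by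
    have : 1 < (2 * δ + 1) ^ 2 := Nat.one_lt_pow (by norm_num) (by omega)
    exact_mod_cast (by omega : 0 < (2 * δ + 1) ^ 2 - 1)
  rw [one_div, inv_mul_le_iff₀ hN]
  nlinarith

instance noise_prob (n : ℕ) [NeZero n] (σ : ℝ) : IsProbabilityMeasure (noise n σ) := by
  unfold noise; infer_instance

lemma weight_meas {n δ : ℕ} [NeZero n] (σ tn : ℝ) (x : Px n → ℝ) (p q : Px n) :
    Measurable (fun z : Px n → ℝ => snlmWeight n δ σ tn x (fun q => x q + z q) p q) := by
  unfold snlmWeight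
  exact Measurable.ite (measurableSet_le (dist_meas x p q) measurable_const)
    measurable_const measurable_const

lemma weight_nonneg {n δ : ℕ} (σ tn : ℝ) (x y : Px n → ℝ) (p q : Px n) :
    0 ≤ snlmWeight n δ σ tn x y p q := by
  unfold snlmWeight; split_ifs <;> norm_num

lemma weight_dep {n δ : ℕ} (σ tn : ℝ) (x : Px n → ℝ) (p q : Px n) (z z' : Px n → ℝ)
    (h : ∀ r ∈ (offsets δ).image (shift q), z r = z' r) :
    snlmWeight n δ σ tn x (fun q => x q + z q) p q =
      snlmWeight n δ σ tn x (fun q => x q + z' q) p q := by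
  have h0 : z q = z' q := h q (Finset.mem_image.2 ⟨(0, 0), zero_mem_offsets δ, shift_zero' q⟩)
  have : snlmDist2 n δ x (fun q => x q + z q) p q = snlmDist2 n δ x (fun q => x q + z' q) p q := by
    unfold snlmDist2
    simp only [h0]
    congr 2
    refine Finset.sum_congr rfl fun o ho => ?_
    rw [h _ (Finset.mem_image_of_mem _ ho)]
  unfold snlmWeight
  rw [this]

lemma exp_weight {σ pp : ℝ} {n δ : ℕ} [NeZero n] (tn : ℝ) (x : Px n → ℝ) (p q : Px n)
    (hpp0 : 0 < pp)
    (hpp : pp ≤ (noise n σ).real {z | snlmDist2 n δ x (fun q => x q + z q) p q ≤ σ ^ 2 + tn}) :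
    ∫ z, Real.exp (-snlmWeight n δ σ tn x (fun q => x q + z q) p q) ∂(noise n σ) ≤
      Real.exp (-(pp / 2)) := by
  set E := {z : Px n → ℝ | snlmDist2 n δ x (fun q => x q + z q) p q ≤ σ ^ 2 + tn} with hE
  have hEm : MeasurableSet E := measurableSet_le (dist_meas x p q) measurable_const
  have e : ∀ z, Real.exp (-snlmWeight n δ σ tn x (fun q => x q + z q) p q) =
      1 - (1 - Real.exp (-1)) * E.indicator (fun _ => (1:ℝ)) z := by
    intro z
    by_cases hz : z ∈ E
    · have hz' : snlmDist2 n δ x (fun q => x q + z q) p q ≤ σ ^ 2 + tn := hz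
      simp [snlmWeight, hz', hz]
    · have hz' : ¬ snlmDist2 n δ x (fun q => x q + z q) p q ≤ σ ^ 2 + tn := hz
      simp [snlmWeight, hz', hz]
  simp_rw [e]
  rw [integral_sub (integrable_const _)
    (((integrable_const (1:ℝ)).indicator hEm).const_mul _), integral_const_mul,
    integral_indicator_const _ hEm]
  simp only [integral_const, probReal_univ, smul_eq_mul, mul_one]
  have h1 : Real.exp (-1) ≤ 1 / 2 := by
    rw [Real.exp_neg, one_div]
    exact inv_anti₀ (by norm_num) (by linarith [Real.add_one_le_exp (1:ℝ)])
  have h2 := Real.add_one_le_exp (-(pp / 2))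
  nlinarith

lemma block_disj {n δ q : ℕ} (hq : q * (2 * δ + 1) ≤ n) (s j : ZMod n) (k l : ℕ) (hk : k < q)
    (hl : l < q) (hkl : k ≠ l) :
    Disjoint ((offsets δ).image (shift ((s + ((k * (2 * δ + 1) : ℕ) : ZMod n), j) : Px n)))
      ((offsets δ).image (shift ((s + ((l * (2 * δ + 1) : ℕ) : ZMod n), j) : Px n))) := by
  rw [Finset.disjoint_left]
  intro r hr hr'
  obtain ⟨o, ho, rfl⟩ := Finset.mem_image.1 hr
  obtain ⟨o', ho', h⟩ := Finset.mem_image.1 hr'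
  simp only [offsets, Finset.mem_product, Finset.mem_Icc] at ho ho'
  have h1 := congrArg Prod.fst h
  simp only [shift] at h1
  have h2 : (((l * (2 * δ + 1) : ℕ) + o'.1 : ℤ) : ZMod n) =
      (((k * (2 * δ + 1) : ℕ) + o.1 : ℤ) : ZMod n) := by
    push_cast at h1 ⊢
    linear_combination h1
  rw [ZMod.intCast_eq_intCast_iff_dvd_sub] at h2
  have hk' : (k + 1) * (2 * δ + 1) ≤ q * (2 * δ + 1) := Nat.mul_le_mul_right _ hk
  have hl' : (l + 1) * (2 * δ + 1) ≤ q * (2 * δ + 1) := Nat.mul_le_mul_right _ hl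
  rw [add_mul, one_mul] at hk' hl'
  have h3 := Int.eq_zero_of_abs_lt_dvd h2 (by rw [abs_lt]; constructor <;> omega)
  rcases lt_or_gt_of_ne hkl with hlt | hlt
  · have : (k + 1) * (2 * δ + 1) ≤ l * (2 * δ + 1) := Nat.mul_le_mul_right _ hlt
    rw [add_mul, one_mul] at this
    omega
  · have : (l + 1) * (2 * δ + 1) ≤ k * (2 * δ + 1) := Nat.mul_le_mul_right _ hlt
    rw [add_mul, one_mul] at this
    omega

/-- Exponential moment bound for the whole row, by averaging over translates. -/
lemma row_mgf {σ pp : ℝ} {n δ q : ℕ} [NeZero n] (hq : q * (2 * δ + 1) ≤ n) (hq0 : 0 < q)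
    (tn : ℝ) (x : Px n → ℝ) (p : Px n) (j : ZMod n) (hpp0 : 0 < pp)
    (hpp : ∀ m : ZMod n, pp ≤ (noise n σ).real
      {z | snlmDist2 n δ x (fun q => x q + z q) p (m, j) ≤ σ ^ 2 + tn}) :
    ∫ z, Real.exp (-((q : ℝ) / n *
      ∑ m : ZMod n, snlmWeight n δ σ tn x (fun q => x q + z q) p (m, j))) ∂(noise n σ) ≤
      Real.exp (-(q * (pp / 2))) := by
  classical
  have hn0 : (0:ℝ) < n := by exact_mod_cast Nat.pos_of_ne_zero (NeZero.ne n)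
  set W : ZMod n → (Px n → ℝ) → ℝ :=
    fun m z => snlmWeight n δ σ tn x (fun q => x q + z q) p (m, j) with hW
  have hWm : ∀ m, Measurable (W m) := fun m => weight_meas σ tn x p (m, j)
  have hW0 : ∀ m z, 0 ≤ W m z := fun m z => weight_nonneg _ _ _ _ _ _
  let G : ZMod n → (Px n → ℝ) → ℝ := fun s z =>
    ∏ k ∈ range q, Real.exp (-W (s + ((k * (2 * δ + 1) : ℕ) : ZMod n)) z)
  have hGm : ∀ s, Measurable (G s) := fun s =>
    Finset.measurable_fun_prod _ fun k _ => (Real.measurable_exp.comp (hWm _).neg)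
  have hGi : ∀ s, Integrable (G s) (noise n σ) := fun s => by
    refine Integrable.of_bound (hGm s).aestronglyMeasurable 1 (ae_of_all _ fun z => ?_)
    rw [Real.norm_eq_abs, abs_of_nonneg (Finset.prod_nonneg fun k _ => (Real.exp_pos _).le)]
    exact Finset.prod_le_one (fun k _ => (Real.exp_pos _).le) fun k _ =>
      Real.exp_le_one_iff.2 (by linarith [hW0 (s + ((k * (2 * δ + 1) : ℕ) : ZMod n)) z])
  have hGint : ∀ s, ∫ z, G s z ∂(noise n σ) ≤ Real.exp (-(q * (pp / 2))) := by
    intro s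
    have := block_prod (ι := Px n) (gam σ)
      (fun k z => Real.exp (-W (s + ((k * (2 * δ + 1) : ℕ) : ZMod n)) z))
      (fun k => (offsets δ).image (shift ((s + ((k * (2 * δ + 1) : ℕ) : ZMod n), j) : Px n)))
      (fun k => Real.measurable_exp.comp (hWm _).neg)
      (fun k z z' h => by
        simp only [hW]; rw [weight_dep σ tn x p _ z z' h]) q
      (fun k hk l hl hkl => block_disj hq s j k l hk hl hkl)
    calc ∫ z, G s z ∂(noise n σ) = ∏ k ∈ range q,
          ∫ z, Real.exp (-W (s + ((k * (2 * δ + 1) : ℕ) : ZMod n)) z) ∂(noise n σ) := this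
      _ ≤ ∏ k ∈ range q, Real.exp (-(pp / 2)) :=
          Finset.prod_le_prod (fun k _ => integral_nonneg fun z => (Real.exp_pos _).le)
            fun k _ => exp_weight tn x p _ hpp0 (hpp _)
      _ = _ := by
          rw [Finset.prod_const, Finset.card_range, ← Real.exp_nat_mul]; congr 1; ring
  have hpt : ∀ z, Real.exp (-((q : ℝ) / n * ∑ m : ZMod n, W m z)) ≤
      ∑ s : ZMod n, (1 / (n:ℝ)) * G s z := by
    intro z
    have hj := convexOn_exp.map_sum_le (t := (Finset.univ : Finset (ZMod n)))
      (w := fun _ => 1 / (n:ℝ))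
      (p := fun s => ∑ k ∈ range q, -W (s + ((k * (2 * δ + 1) : ℕ) : ZMod n)) z)
      (fun _ _ => by positivity) (by
        rw [Finset.sum_const, Finset.card_univ, ZMod.card, nsmul_eq_mul]
        field_simp) (fun _ _ => Set.mem_univ _)
    simp only [smul_eq_mul, Real.exp_sum] at hj
    rw [← Real.exp_sum] at hj
    refine le_trans (le_of_eq ?_) hj
    congr 1
    rw [← Finset.mul_sum, Finset.sum_comm]
    have : ∀ k ∈ range q, ∑ s : ZMod n, -W (s + ((k * (2 * δ + 1) : ℕ) : ZMod n)) z =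
        -∑ m : ZMod n, W m z := fun k _ => by
      rw [Finset.sum_neg_distrib]
      congr 1
      exact Equiv.sum_comp (Equiv.addRight (((k * (2 * δ + 1) : ℕ) : ZMod n))) (fun m => W m z)
    rw [Finset.sum_congr rfl this, Finset.sum_const, Finset.card_range, nsmul_eq_mul]
    ring
  calc ∫ z, Real.exp (-((q : ℝ) / n * ∑ m : ZMod n, W m z)) ∂(noise n σ)
      ≤ ∫ z, ∑ s : ZMod n, (1 / (n:ℝ)) * G s z ∂(noise n σ) := by
        refine integral_mono_of_nonneg (ae_of_all _ fun z => (Real.exp_pos _).le)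
          (integrable_finsetSum _ fun s _ => (hGi s).const_mul _) (ae_of_all _ hpt)
    _ = ∑ s : ZMod n, (1 / (n:ℝ)) * ∫ z, G s z ∂(noise n σ) := by
        rw [integral_finsetSum _ fun s _ => (hGi s).const_mul _]
        simp_rw [integral_const_mul]
    _ ≤ ∑ s : ZMod n, (1 / (n:ℝ)) * Real.exp (-(q * (pp / 2))) :=
        Finset.sum_le_sum fun s _ => mul_le_mul_of_nonneg_left (hGint s) (by positivity)
    _ = _ := by
        rw [Finset.sum_const, Finset.card_univ, ZMod.card, nsmul_eq_mul]
        field_simp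

/-- Proposition 1: for the step image `1_{t₂<1/2}` with `n` even,
there is a constant `p₀ > 0`, independent of `n`, `δ_n` and `t_n`, such that the
SNLM weights of the row just below the edge satisfy, for every `t > 0`,
`P(Σ_m w^S_{i*,j*}(m, j*-1) - n p₀ < -t) ≤ 4 δ_n exp(-t²/(4 n δ_n))`. -/
theorem snlm_below_edge_weights (σ : ℝ) (hσ : 0 < σ) :
    ∃ p₀ : ℝ, 0 < p₀ ∧ ∃ n₀ : ℕ, ∀ (n : ℕ) [NeZero n], n₀ ≤ n → Even n →
      ∀ (δ : ℕ) (tn : ℝ), 0 < tn → ∀ (i : ZMod n) (t : ℝ), 0 < t →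
        ((noise n σ)
          {z | (∑ m : ZMod n,
              snlmWeight n δ σ tn (stepX n) (fun q => stepX n q + z q)
                (i, jstar n) (m, jstar n - 1)) - n * p₀ < -t}).toReal ≤
        4 * δ * Real.exp (-t ^ 2 / (4 * n * δ)) := by
  obtain ⟨pp, hpp0, hpp1, hpp⟩ := chi_noncentral σ hσ
  refine ⟨pp / 4, by positivity, 0, ?_⟩
  intro n _ _ he δ tn htn i t ht
  have hn0 : (0:ℝ) < n := by exact_mod_cast Nat.pos_of_ne_zero (NeZero.ne n)
  change (noise n σ).real _ ≤ _
  set E := {z : Px n → ℝ | (∑ m : ZMod n,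
              snlmWeight n δ σ tn (stepX n) (fun q => stepX n q + z q)
                (i, jstar n) (m, jstar n - 1)) - n * (pp / 4) < -t} with hE
  have hEm : MeasurableSet E := measurableSet_lt
    ((Finset.measurable_fun_sum _ fun m _ => weight_meas σ tn _ _ _).sub_const _) measurable_const
  have hS0 : ∀ z : Px n → ℝ, 0 ≤ ∑ m : ZMod n,
      snlmWeight n δ σ tn (stepX n) (fun q => stepX n q + z q)
                (i, jstar n) (m, jstar n - 1) :=
    fun z => Finset.sum_nonneg fun m _ => weight_nonneg _ _ _ _ _ _
  -- large `t`: the event is empty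
  rcases le_or_gt (n * (pp / 4)) t with htl | htl
  · have : E = ∅ := by
      refine Set.eq_empty_of_forall_notMem fun z hz => ?_
      have := hS0 z
      simp only [hE, Set.mem_ofPred_eq] at hz
      linarith
    rw [this, measureReal_empty]
    positivity
  rcases Nat.eq_zero_or_pos δ with hδ | hδ
  · -- zero window: all weights are one
    have : E = ∅ := by
      refine Set.eq_empty_of_forall_notMem fun z hz => ?_
      simp only [hE, Set.mem_ofPred_eq] at hz
      have h1 : ∀ m : ZMod n, snlmWeight n δ σ tn (stepX n) (fun q => stepX n q + z q)
                (i, jstar n) (m, jstar n - 1) = 1 := fun m => by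
        subst hδ
        have : (0:ℝ) ≤ σ ^ 2 + tn := by positivity
        simp [snlmWeight, snlmDist2, this]
      simp only [h1, Finset.sum_const, Finset.card_univ, ZMod.card, nsmul_eq_mul, mul_one] at hz
      nlinarith
    rw [this, measureReal_empty]
    positivity
  have hδ1 : (1:ℝ) ≤ δ := by exact_mod_cast hδ
  have ht2 : t ^ 2 ≤ (n * (pp / 4)) ^ 2 := by gcongr
  rcases Nat.lt_or_ge (2 * δ) n with hn | hn
  · -- main case
    set q := n / (2 * δ + 1) with hqdef
    have hq : q * (2 * δ + 1) ≤ n := Nat.div_mul_le_self _ _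
    have hq0 : 0 < q := Nat.div_pos (by omega) (by omega)
    have hqr : (1:ℝ) ≤ q := by exact_mod_cast hq0
    have hnq : (n:ℝ) ≤ 6 * q * δ := by
      have h1 : n < (2 * δ + 1) * (q + 1) := Nat.lt_mul_div_succ n (by omega)
      have h2 : (n:ℝ) < (2 * δ + 1) * (q + 1) := by exact_mod_cast h1
      nlinarith
    have hmgf := row_mgf (σ := σ) (pp := pp) hq hq0 tn (stepX n) (i, jstar n) (jstar n - 1) hpp0
      (fun m => prob_weight hpp hδ he hn i m htn)
    set F : (Px n → ℝ) → ℝ := fun z => Real.exp (-((q : ℝ) / n * ∑ m : ZMod n,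
      snlmWeight n δ σ tn (stepX n) (fun q => stepX n q + z q)
                (i, jstar n) (m, jstar n - 1))) with hF
    have hFm : Measurable F := Real.measurable_exp.comp
      (((Finset.measurable_fun_sum _ fun m _ => weight_meas σ tn _ _ _).const_mul _).neg)
    have hFi : Integrable F (noise n σ) := by
      refine Integrable.of_bound hFm.aestronglyMeasurable 1 (ae_of_all _ fun z => ?_)
      rw [Real.norm_eq_abs, abs_of_pos (Real.exp_pos _)]
      refine Real.exp_le_one_iff.2 ?_
      have := mul_nonneg (by positivity : (0:ℝ) ≤ (q:ℝ) / n) (hS0 z)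
      linarith
    have hmk := mul_meas_ge_le_integral_of_nonneg
      (ae_of_all (noise n σ) fun z => (Real.exp_pos _).le) hFi (Real.exp (-(q * (pp / 4))))
    have hsub : E ⊆ {z | Real.exp (-(q * (pp / 4))) ≤ F z} := by
      intro z hz
      simp only [hE, Set.mem_ofPred_eq] at hz
      simp only [hF, Set.mem_ofPred_eq]
      refine Real.exp_le_exp.2 (neg_le_neg ?_)
      calc (q:ℝ) / n * _ ≤ (q:ℝ) / n * (n * (pp / 4)) :=
            mul_le_mul_of_nonneg_left (by linarith) (by positivity)
        _ = _ := by field_simp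
    have h1 : (noise n σ).real E ≤ Real.exp (-(q * (pp / 4))) := by
      have h2 := measureReal_mono hsub (μ := noise n σ)
      have h3 : Real.exp (-(q * (pp / 4))) * (noise n σ).real E ≤ Real.exp (-(q * (pp / 2))) :=
        (mul_le_mul_of_nonneg_left h2 (Real.exp_pos _).le).trans (hmk.trans hmgf)
      have h4 : Real.exp (-(q * (pp / 2))) =
          Real.exp (-(q * (pp / 4))) * Real.exp (-(q * (pp / 4))) := by
        rw [← Real.exp_add]; congr 1; ring
      rw [h4] at h3
      exact le_of_mul_le_mul_left h3 (Real.exp_pos _)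
    refine h1.trans ?_
    have h5 : Real.exp (-(q * (pp / 4))) ≤ Real.exp (-t ^ 2 / (4 * n * δ)) := by
      refine Real.exp_le_exp.2 ?_
      rw [neg_div, neg_le_neg_iff, div_le_iff₀ (by positivity)]
      calc t ^ 2 ≤ (n * (pp / 4)) ^ 2 := ht2
        _ = n * (pp / 4) * (pp / 4) * n := by ring
        _ ≤ n * (pp / 4) * (pp / 4) * (6 * q * δ) := by gcongr
        _ ≤ n * (pp / 4) * (1 / 4) * (6 * q * δ) := by gcongr
        _ = q * (pp / 4) * (n * δ) * (3 / 2) := by ring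
        _ ≤ q * (pp / 4) * (n * δ) * 4 := by gcongr; norm_num
        _ = _ := by ring
    refine h5.trans ?_
    have := Real.exp_pos (-t ^ 2 / (4 * n * δ))
    nlinarith
  · -- huge window: the bound is trivial
    refine measureReal_le_one.trans ?_
    have hn' : (n:ℝ) ≤ 2 * δ := by exact_mod_cast hn
    have h6 : -(1/2 : ℝ) ≤ -t ^ 2 / (4 * n * δ) := by
      rw [neg_div, neg_le_neg_iff, div_le_iff₀ (by positivity)]
      calc t ^ 2 ≤ (n * (pp / 4)) ^ 2 := ht2
        _ = n * n * (pp / 4) ^ 2 := by ring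
        _ ≤ n * (2 * δ) * 1 ^ 2 := by gcongr; linarith
        _ = _ := by ring
    have h7 := Real.add_one_le_exp (-t ^ 2 / (4 * n * δ))
    nlinarith
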